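/- Let n₁ ≥ 2 and n₂ ≥ 4 be integers. Then dim(K_{n₁}⊙P_{n₂}) ≥ 2n₁. -/

import Mathlib

/-!
Vertices of one copy of `H` in `G ⊙ H` are indistinguishable from outside that copy, since every
path leaving the copy does so through the vertex of `G` it is attached to
(`corona_dist_outside`). Inside a copy all distances are at most two, so a single vertex `w` of the
copy takes only the values `1` and `2` on the other vertices; when `H` has at least four vertices,
two of these get the same value by the pigeonhole principle. Hence a resolving set meets every copy
in at least two vertices (`two_in_copy`), and the `n₁` copies are disjoint.
-/

open SimpleGraph

/-- The corona product `G ⊙ H`: one copy of `G`, one copy of `H` for each vertex of `G`,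
with the `i`-th vertex of `G` joined to every vertex of the `i`-th copy of `H`. -/
def corona {α β : Type*} (G : SimpleGraph α) (H : SimpleGraph β) :
    SimpleGraph (α ⊕ α × β) :=
  SimpleGraph.fromRel (fun x y =>
    match x, y with
    | Sum.inl a, Sum.inl b => G.Adj a b
    | Sum.inl a, Sum.inr iu => a = iu.1
    | Sum.inr iu, Sum.inr jw => iu.1 = jw.1 ∧ H.Adj iu.2 jw.2
    | _, _ => False)

/-- The distance from a vertex to a set of vertices: `d(v,A) = min_{u ∈ A} d(v,u)`. -/
noncomputable def setDist {α : Type*} (G : SimpleGraph α) (v : α) (A : Set α) : ℕ :=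
  sInf (G.dist v '' A)

/-- `S` is a resolving set for `G`: distinct vertices have distinct metric representations. -/
def IsResolvingSet {α : Type*} (G : SimpleGraph α) (S : Set α) : Prop :=
  ∀ u v : α, (∀ w ∈ S, G.dist u w = G.dist v w) → u = v

/-- The metric dimension of `G`: minimum cardinality of a resolving set. -/
noncomputable def metricDim {α : Type*} (G : SimpleGraph α) : ℕ :=
  sInf {k | ∃ S : Set α, IsResolvingSet G S ∧ S.ncard = k}

/-- A family of sets is a resolving partition for `G` if it is a partition of the vertex set
into nonempty cells and distinct vertices have distinct partition representations. -/
def IsResolvingPartition {α : Type*} (G : SimpleGraph α) (P : Set (Set α)) : Prop :=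
  (∀ A ∈ P, A.Nonempty) ∧ (∀ v : α, ∃! A : Set α, A ∈ P ∧ v ∈ A) ∧
    ∀ u v : α, (∀ A ∈ P, setDist G u A = setDist G v A) → u = v

/-- The partition dimension of `G`: minimum number of cells in a resolving partition. -/
noncomputable def partitionDim {α : Type*} (G : SimpleGraph α) : ℕ :=
  sInf {t | ∃ P : Set (Set α), IsResolvingPartition G P ∧ P.ncard = t}

/-- `c(H)`: the maximum cardinality of a connected component of `H` which is isomorphic to a
complete graph (i.e. whose vertex set is a clique). -/
noncomputable def maxCompleteComp {β : Type*} (H : SimpleGraph β) : ℕ :=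
  sSup {k | ∃ C : H.ConnectedComponent, H.IsClique C.supp ∧ C.supp.ncard = k}

/-- `β(H)`: the number of isolated vertices of `H`. -/
noncomputable def numIsolated {β : Type*} (H : SimpleGraph β) : ℕ :=
  Set.ncard {v : β | ∀ u, ¬ H.Adj v u}

/-- `α(H)`: the number of connected components of `H` of order greater than one. -/
noncomputable def numBigComp {β : Type*} (H : SimpleGraph β) : ℕ :=
  Set.ncard {C : H.ConnectedComponent | 1 < C.supp.ncard}

section Corona

variable {α β : Type*} {G : SimpleGraph α} {H : SimpleGraph β}

lemma corona_adj_inl_inr (i : α) (u : β) : (corona G H).Adj (Sum.inl i) (Sum.inr (i, u)) := by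
  simp [corona, SimpleGraph.fromRel_adj]

lemma corona_adj_inl_inl {i j : α} (h : G.Adj i j) :
    (corona G H).Adj (Sum.inl i) (Sum.inl j) := by
  simp [corona, SimpleGraph.fromRel_adj, h, h.ne]

/-- A neighbour of a vertex of the `i`-th copy is the `i`-th vertex of `G` or lies in the same
copy. -/
lemma corona_adj_inr {i : α} {u : β} {y : α ⊕ α × β}
    (h : (corona G H).Adj (Sum.inr (i, u)) y) : y = Sum.inl i ∨ ∃ v, y = Sum.inr (i, v) := by
  rcases y with j | ⟨j, v⟩
  · simp [corona, SimpleGraph.fromRel_adj] at h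
    simp [h]
  · simp only [corona, SimpleGraph.fromRel_adj] at h
    rcases h.2 with h | h
    · exact Or.inr ⟨v, by rw [h.1]⟩
    · exact Or.inr ⟨v, by rw [← h.1]⟩

/-- A walk leaving a copy can be rerouted, without getting longer, to start at any other vertex of
that copy. -/
lemma exists_walk_le {i : α} {s x : α ⊕ α × β} (p : (corona G H).Walk s x)
    (hx : ∀ w, x ≠ Sum.inr (i, w)) (v : β) (hs : s = Sum.inr (i, v)) (u : β) :
    ∃ q : (corona G H).Walk (Sum.inr (i, u)) x, q.length ≤ p.length := by
  induction p generalizing v with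
  | nil => exact absurd hs (hx v)
  | cons h p ih =>
    subst hs
    rcases corona_adj_inr h with rfl | ⟨v', rfl⟩
    · exact ⟨SimpleGraph.Walk.cons (corona_adj_inl_inr i u).symm p, by simp⟩
    · obtain ⟨q, hq⟩ := ih hx v' rfl
      exact ⟨q, by simp only [SimpleGraph.Walk.length_cons]; omega⟩

lemma corona_reachable_copy (i : α) (u v : β) :
    (corona G H).Reachable (Sum.inr (i, u)) (Sum.inr (i, v)) :=
  (corona_adj_inl_inr i u).symm.reachable.trans (corona_adj_inl_inr i v).reachable

lemma corona_dist_outside {i : α} {x : α ⊕ α × β} (hx : ∀ w, x ≠ Sum.inr (i, w)) (u v : β) :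
    (corona G H).dist (Sum.inr (i, u)) x = (corona G H).dist (Sum.inr (i, v)) x := by
  by_cases hr : (corona G H).Reachable (Sum.inr (i, u)) x
  · have key : ∀ a b : β, (corona G H).Reachable (Sum.inr (i, a)) x →
        (corona G H).dist (Sum.inr (i, b)) x ≤ (corona G H).dist (Sum.inr (i, a)) x := by
      intro a b ha
      obtain ⟨p, hp⟩ := ha.exists_walk_length_eq_dist
      obtain ⟨q, hq⟩ := exists_walk_le p hx a rfl b
      exact (SimpleGraph.dist_le q).trans (hq.trans hp.le)
    exact le_antisymm (key v u ((corona_reachable_copy i v u).trans hr)) (key u v hr)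
  · -- both distances take the junk value `0`
    have hr' : ¬ (corona G H).Reachable (Sum.inr (i, v)) x := fun h =>
      hr ((corona_reachable_copy i u v).trans h)
    rw [SimpleGraph.dist_eq_zero_of_not_reachable hr, SimpleGraph.dist_eq_zero_of_not_reachable hr']

lemma corona_dist_inside (i : α) {u w : β} (h : u ≠ w) :
    (corona G H).dist (Sum.inr (i, u)) (Sum.inr (i, w)) = 1 ∨
      (corona G H).dist (Sum.inr (i, u)) (Sum.inr (i, w)) = 2 := by
  have hle := SimpleGraph.dist_le (SimpleGraph.Walk.cons
    (corona_adj_inl_inr (G := G) (H := H) i u).symm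
    (SimpleGraph.Walk.cons (corona_adj_inl_inr i w) SimpleGraph.Walk.nil))
  have hpos := (corona_reachable_copy (G := G) (H := H) i u w).pos_dist_of_ne (by simpa using h)
  simp only [SimpleGraph.Walk.length_cons, SimpleGraph.Walk.length_nil] at hle
  omega

/-- A resolving set meets each copy of `H` in two vertices as soon as `H` has four. -/
lemma two_in_copy [Fintype β] (hβ : 4 ≤ Fintype.card β) {S : Set (α ⊕ α × β)}
    (hS : IsResolvingSet (corona G H) S) (i : α) :
    ∃ a b : β, a ≠ b ∧ Sum.inr (i, a) ∈ S ∧ Sum.inr (i, b) ∈ S := by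
  classical
  by_contra! hno
  -- a vertex `w` outside of which the copy contains no element of `S`
  obtain ⟨w, hw⟩ : ∃ w : β, ∀ b, Sum.inr (i, b) ∈ S → b = w := by
    by_cases hex : ∃ w, Sum.inr (i, w) ∈ S
    · obtain ⟨w, hwS⟩ := hex
      refine ⟨w, fun b hb => ?_⟩
      by_contra hbw
      exact hno b w hbw hb hwS
    · have : Nonempty β := Fintype.card_pos_iff.1 (by omega)
      exact ⟨Classical.arbitrary β, fun b hb => absurd ⟨b, hb⟩ hex⟩
  obtain ⟨u, hu, v, hv, huv, hd⟩ := Finset.exists_ne_map_eq_of_card_lt_of_maps_to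
    (s := Finset.univ.erase w) (t := ({1, 2} : Finset ℕ))
    (f := fun u => (corona G H).dist (Sum.inr (i, u)) (Sum.inr (i, w)))
    (by
      rw [Finset.card_erase_of_mem (Finset.mem_univ w), Finset.card_univ]
      have : ({1, 2} : Finset ℕ).card = 2 := rfl
      omega)
    (fun u hu => by simpa using corona_dist_inside i (Finset.ne_of_mem_erase hu))
  refine huv ?_
  have := hS (Sum.inr (i, u)) (Sum.inr (i, v)) fun x hx => ?_
  · simpa using this
  · by_cases hxi : ∃ b, x = Sum.inr (i, b)
    · obtain ⟨b, rfl⟩ := hxi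
      rw [hw b hx]
      exact hd
    · exact corona_dist_outside (not_exists.1 hxi) u v

lemma corona_reachable (hG : G.Preconnected) (x y : α ⊕ α × β) :
    (corona G H).Reachable x y := by
  have hbase : ∀ i j : α, (corona G H).Reachable (Sum.inl i) (Sum.inl j) := fun i j =>
    (hG i j).map (⟨Sum.inl, corona_adj_inl_inl⟩ : G →g corona G H)
  have hdown : ∀ x : α ⊕ α × β, ∃ i, (corona G H).Reachable x (Sum.inl i) := by
    rintro (i | ⟨i, u⟩)
    · exact ⟨i, SimpleGraph.Reachable.refl _⟩
    · exact ⟨i, (corona_adj_inl_inr i u).symm.reachable⟩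
  obtain ⟨i, hi⟩ := hdown x
  obtain ⟨j, hj⟩ := hdown y
  exact hi.trans ((hbase i j).trans hj.symm)

end Corona

/-- For integers `n₁ ≥ 2` and `n₂ ≥ 4`, `dim(K_{n₁}⊙P_{n₂}) ≥ 2n₁`. -/
theorem stmt18 (n₁ n₂ : ℕ) (h₁ : 2 ≤ n₁) (h₂ : 4 ≤ n₂) :
    metricDim (corona (⊤ : SimpleGraph (Fin n₁)) (pathGraph n₂)) ≥ 2 * n₁ := by
  -- resolving sets exist, so that the infimum is not the junk value `sInf ∅ = 0`
  have hne : {k | ∃ S : Set (Fin n₁ ⊕ Fin n₁ × Fin n₂),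
      IsResolvingSet (corona (⊤ : SimpleGraph (Fin n₁)) (pathGraph n₂)) S ∧
        S.ncard = k}.Nonempty := by
    refine ⟨_, Set.univ, fun u v h => ?_, rfl⟩
    have h0 := h v (Set.mem_univ v)
    rw [SimpleGraph.dist_self] at h0
    exact (corona_reachable SimpleGraph.preconnected_top u v).dist_eq_zero_iff.1 h0
  refine le_csInf hne ?_
  rintro k ⟨S, hS, rfl⟩
  choose a b hab ha hb using fun i => two_in_copy (by simpa using h₂) hS i
  let f : Fin n₁ × Bool → Fin n₁ ⊕ Fin n₁ × Fin n₂ :=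
    fun p => Sum.inr (p.1, if p.2 then a p.1 else b p.1)
  have hf : Function.Injective f := by
    rintro ⟨i, s⟩ ⟨j, t⟩ h
    simp only [f, Sum.inr.injEq, Prod.mk.injEq] at h
    obtain ⟨rfl, h⟩ := h
    have h' := (hab i).symm
    cases s <;> cases t <;> simp_all
  have hsub : Set.range f ⊆ S := by
    rintro _ ⟨⟨i, s⟩, rfl⟩
    cases s
    · exact hb i
    · exact ha i
  calc 2 * n₁ = (Set.range f).ncard := by
        rw [← Set.image_univ, Set.ncard_image_of_injective _ hf, Set.ncard_univ]
        simp [mul_comm]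
    _ ≤ S.ncard := Set.ncard_le_ncard hsub (Set.toFinite S)
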